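/- arXiv:2201.10501 — 2 statements merged into one kernel-verified Lean document; each statement's English description precedes it below -/
import Mathlib

section
/- Let 𝒢 be a finite connected simple graph, b_0 ∈ V, and f a weight function. Then the function l(v) = −dist(b_0, v) is a layering of 𝒢, its facet graph G_1 admits no partition (V_0, V_1) of V into nonempty parts with b_0 ∈ V_0 in which every present edge of G_1 between the parts is directed from V_0 to V_1, and consequently f(G_1) > f(G) for every facet graph G ≠ G_1 of 𝒢. -/
open scoped Classical Pointwise

namespace SEP

variable {V : Type*} [Fintype V] [DecidableEq V]

/-- The undirected simple graph underlying a set of directed edges. -/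
def fromDir (D : Set (V × V)) : SimpleGraph V :=
  SimpleGraph.fromRel (fun u v => (u, v) ∈ D)

/-- A layering of a simple graph `G`: the layer difference along each edge is at most one,
and the edges with layer difference exactly one form a connected spanning subgraph. -/
structure IsLayering (G : SimpleGraph V) (l : V → ℤ) : Prop where
  step : ∀ ⦃u v⦄, G.Adj u v → |l u - l v| ≤ 1
  conn : (SimpleGraph.fromRel fun u v => G.Adj u v ∧ |l u - l v| = 1).Connected

/-- The facet graph (as a set of directed edges) associated to a layering. -/
def facetDigraph (G : SimpleGraph V) (l : V → ℤ) : Set (V × V) :=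
  {p | G.Adj p.1 p.2 ∧ l p.2 - l p.1 = 1}

/-- `D` is a facet graph of `G`. -/
def IsFacetGraph (G : SimpleGraph V) (D : Set (V × V)) : Prop :=
  ∃ l : V → ℤ, IsLayering G l ∧ D = facetDigraph G l

/-- A ribbon structure on `G`: at each vertex a cyclic permutation of the incident edges,
encoded by the "next neighbour" function `ρ`. -/
structure IsRibbon (G : SimpleGraph V) (ρ : V → V → V) : Prop where
  adj : ∀ ⦃x y⦄, G.Adj x y → G.Adj x (ρ x y)
  cyc : ∀ ⦃x y z⦄, G.Adj x y → G.Adj x z → ∃ k : ℕ, (ρ x)^[k] y = z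

/-- One step of the Bernardi tour of the tree with (undirected) edge set `T`:
from the node–edge pair (x, xy) move to (y, yx⁺) if xy is a tree edge
and to (x, xy⁺) otherwise. -/
noncomputable def tourStep (ρ : V → V → V) (T : Set (Sym2 V)) (p : V × V) : V × V :=
  if s(p.1, p.2) ∈ T then (p.2, ρ p.2 p.1) else (p.1, ρ p.1 p.2)

/-- The tour of the tree `T`, starting at the basis `(b0, b0b1)`. -/
noncomputable def tourSeq (ρ : V → V → V) (T : Set (Sym2 V)) (b0 b1 : V) (n : ℕ) : V × V :=
  (tourStep ρ T)^[n] (b0, b1)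

/-- The first time the node–edge pair (x, edge xy) becomes current in the tour of `T`. -/
noncomputable def firstVisit (ρ : V → V → V) (T : Set (Sym2 V)) (b0 b1 x y : V) : ℕ :=
  sInf {n | tourSeq ρ T b0 b1 n = (x, y)}

/-- The undirected edge set of a set of directed edges. -/
def und (T : Set (V × V)) : Set (Sym2 V) := {e | ∃ p ∈ T, e = s(p.1, p.2)}

/-- `T` is a spanning tree of the digraph `D`, recorded with its orientation. -/
def IsSpanningTreeOf (T D : Set (V × V)) : Prop :=
  T ⊆ D ∧ (fromDir T).IsTree

/-- `T` is a Jaeger tree of the digraph `D` with respect to the ribbon structure `ρ` and the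
basis `(b0, b1)`: it is a spanning tree of `D` and every directed edge t→h of `D` not in `T`
is first reached at its tail `t` in the tour of `T`. -/
def IsJaegerTree (ρ : V → V → V) (b0 b1 : V) (D T : Set (V × V)) : Prop :=
  IsSpanningTreeOf T D ∧
    ∀ p ∈ D, s(p.1, p.2) ∉ und T →
      firstVisit ρ (und T) b0 b1 p.1 p.2 < firstVisit ρ (und T) b0 b1 p.2 p.1

/-- The directed edge `p = (t, h)` of `T` is a tail-edge of `T` w.r.t. the base vertex `b0`:
`b0` and `t` lie in the same component of `T - th`. -/
def IsTailEdge (b0 : V) (T : Set (V × V)) (p : V × V) : Prop :=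
  p ∈ T ∧ (fromDir (T \ {p})).Reachable b0 p.1

/-- The set of tail-edges of `T`. -/
def tailEdges (b0 : V) (T : Set (V × V)) : Set (V × V) :=
  {p | IsTailEdge b0 T p}

/-- The number of tail-edges of `T`. -/
noncomputable def numTailEdges (b0 : V) (T : Set (V × V)) : ℕ :=
  Nat.card (tailEdges b0 T)

/-- The ordering `≺` of Jaeger trees of one facet graph: `T' ≺ T` iff their tours first
differ at a current node–edge pair `(t, th)` with the directed edge `th ∉ T'` and `th ∈ T`. -/
def treePrec (ρ : V → V → V) (b0 b1 : V) (T' T : Set (V × V)) : Prop :=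
  ∃ n : ℕ, (∀ m ≤ n, tourSeq ρ (und T') b0 b1 m = tourSeq ρ (und T) b0 b1 m) ∧
    tourSeq ρ (und T) b0 b1 n ∈ T ∧ tourSeq ρ (und T) b0 b1 n ∉ T'

/-- The standard basis vector of `ℝ^V` corresponding to a vertex. -/
noncomputable def stdVec (v : V) : V → ℝ := fun w => if w = v then 1 else 0

/-- The symmetric edge polytope of `G`. -/
noncomputable def symEdgePolytope (G : SimpleGraph V) : Set (V → ℝ) :=
  convexHull ℝ {x | ∃ u v, G.Adj u v ∧ x = stdVec u - stdVec v}

/-- The (root polytope) simplex spanned by a set of directed edges. -/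
noncomputable def simplexOf (T : Set (V × V)) : Set (V → ℝ) :=
  convexHull ℝ {x | ∃ p ∈ T, x = stdVec p.2 - stdVec p.1}

/-- A weight function with base vertex `b0`. -/
structure IsWeight (b0 : V) (f : V → ℝ) : Prop where
  base : f b0 = 1
  lb : ∀ v, v ≠ b0 → -1 ≤ f v
  ub : ∀ v, v ≠ b0 → f v ≤ 0
  total : ∑ v ∈ Finset.univ.erase b0, f v = -1
  indep : LinearIndependent ℚ (fun v : {w : V // w ≠ b0} => f v.1)

/-- The number of lattice points of the `k`-th dilate of the symmetric edge polytope. -/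
noncomputable def latticeCount (G : SimpleGraph V) (k : ℕ) : ℕ :=
  Nat.card {x : V → ℤ // (fun v => (x v : ℝ)) ∈ (k : ℝ) • symEdgePolytope G}

/-- `s` is a side of a bipartition of `G`. -/
def IsBipartition (G : SimpleGraph V) (s : Set V) : Prop :=
  ∀ ⦃u v⦄, G.Adj u v → (u ∈ s ↔ v ∉ s)

/-- A digraph (set of directed edges) is semi-balanced if every cycle of the underlying
undirected graph has the same number of edges oriented in the two cyclic directions. -/
def IsSemiBalanced (D : Set (V × V)) : Prop :=
  ∀ ⦃v : V⦄ (w : (fromDir D).Walk v v), w.IsCycle →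
    (w.darts.countP fun d => decide ((d.toProd.1, d.toProd.2) ∈ D)) =
      (w.darts.countP fun d => decide ((d.toProd.2, d.toProd.1) ∈ D))

/-- `D` is an orientation of (all the edges of) `G`. -/
def IsOrientation (G : SimpleGraph V) (D : Set (V × V)) : Prop :=
  (∀ p ∈ D, G.Adj p.1 p.2) ∧ ∀ ⦃u v⦄, G.Adj u v → ((u, v) ∈ D ↔ (v, u) ∉ D)

/-- The state of the greedy process: the set `H` of included directed edges, the set of
node–edge pairs that have already been current, and the current node–edge pair. -/
structure GreedyState (V : Type*) where
  H : Set (V × V)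
  seen : Set (V × V)
  cur : V × V

/-- One step of the (almost-)greedy process in the digraph `D`; `special` is the set of
directed edges that are exceptionally included when first reached at their tail
(`special = ∅` gives the greedy process, `special = {(u,v)}` the u→v-almost greedy one).
Hidden edges (incident pairs whose edge is absent from `D`) are skipped. -/
noncomputable def greedyStep (D special : Set (V × V)) (ρ : V → V → V)
    (s : GreedyState V) : GreedyState V :=
  let x := s.cur.1
  let y := s.cur.2
  let seen' := s.seen ∪ {s.cur}
  if (y, x) ∈ D then
    -- the current node `x` is the head of the directed edge (y, x)
    if (y, x) ∈ s.seen then ⟨s.H, seen', (x, ρ x y)⟩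
    else ⟨s.H ∪ {(y, x)}, seen', (y, ρ y x)⟩
  else if (x, y) ∈ D then
    -- the current node `x` is the tail of the directed edge (x, y)
    if s.cur ∈ special ∧ (y, x) ∉ s.seen then ⟨s.H ∪ {(x, y)}, seen', (y, ρ y x)⟩
    else if (y, x) ∈ s.seen then ⟨s.H, seen', (y, ρ y x)⟩
    else ⟨s.H, seen', (x, ρ x y)⟩
  else ⟨s.H, seen', (x, ρ x y)⟩

/-- The sequence of states of the (almost-)greedy process started at the basis `(b0, b1)`. -/
noncomputable def greedySeq (D special : Set (V × V)) (ρ : V → V → V) (b0 b1 : V)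
    (n : ℕ) : GreedyState V :=
  (greedyStep D special ρ)^[n] ⟨∅, ∅, (b0, b1)⟩

/-- The stopping time of the (almost-)greedy process: the first moment at which a node–edge
pair becomes current for the second time. -/
noncomputable def greedyStopTime (D special : Set (V × V)) (ρ : V → V → V) (b0 b1 : V) : ℕ :=
  sInf {n | (greedySeq D special ρ b0 b1 n).cur ∈ (greedySeq D special ρ b0 b1 n).seen}

/-- The edge set produced by the (almost-)greedy process. -/
noncomputable def greedyOutput (D special : Set (V × V)) (ρ : V → V → V) (b0 b1 : V) :
    Set (V × V) :=
  (greedySeq D special ρ b0 b1 (greedyStopTime D special ρ b0 b1)).H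

/-- The status of the current node–edge pair `p = (x, y)` (node `x`, edge `xy`) with respect
to a facet graph `D` and a tree `T ⊆ D`: `0` if the edge is in the tree oriented y→x,
`1` if it is hidden, `2` if it is oriented x→y in `D` but not in the tree, `3` if it is in
the tree oriented x→y (and `4` in the remaining case: oriented y→x in `D` but not in `T`). -/
noncomputable def edgeStatus (D T : Set (V × V)) (p : V × V) : ℕ :=
  if (p.2, p.1) ∈ T then 0
  else if (p.1, p.2) ∈ T then 3
  else if (p.1, p.2) ∈ D then 2
  else if (p.2, p.1) ∈ D then 4
  else 1

/-- The quadratic order `<₄` on Jaeger trees (with their facet graphs): the tours, together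
with the statuses of the current edges, agree up to step `n`, and at step `n` the status of
the current edge for the first tree is smaller than for the second one. -/
def quadLT (ρ : V → V → V) (b0 b1 : V) (q q' : Set (V × V) × Set (V × V)) : Prop :=
  ∃ n : ℕ,
    (∀ m < n, tourSeq ρ (und q.2) b0 b1 m = tourSeq ρ (und q'.2) b0 b1 m ∧
      edgeStatus q.1 q.2 (tourSeq ρ (und q.2) b0 b1 m) =
        edgeStatus q'.1 q'.2 (tourSeq ρ (und q'.2) b0 b1 m)) ∧
    tourSeq ρ (und q.2) b0 b1 n = tourSeq ρ (und q'.2) b0 b1 n ∧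
    edgeStatus q.1 q.2 (tourSeq ρ (und q.2) b0 b1 n) <
      edgeStatus q'.1 q'.2 (tourSeq ρ (und q'.2) b0 b1 n)

end SEP

namespace SEP

/-!
A function `l` that changes by at most one along every edge satisfies `l b - dist b v ≤ l v`, so,
normalized by its value at `b`, it lies pointwise above `v ↦ -dist b v`. The weights sum to zero
and are negative away from `b`, so the normalization does not change the weighted sum and lowering
the layer of any vertex `v ≠ b` strictly increases it. The absence of directed cuts and the
connectedness of the present edges both come from walking towards `b` along a shortest path.
-/

section Distance

variable {V : Type*} {G : SimpleGraph V} {b : V}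

theorem exists_adj_dist_eq_add_one {v : V} (hv : G.dist b v ≠ 0) :
    ∃ u, G.Adj u v ∧ G.dist b v = G.dist b u + 1 := by
  obtain ⟨p, hp⟩ := SimpleGraph.exists_walk_of_dist_ne_zero (SimpleGraph.dist_comm ▸ hv)
  cases p with
  | nil => exact absurd SimpleGraph.dist_self hv
  | @cons _ u _ hvu q =>
    refine ⟨u, hvu.symm, ?_⟩
    have hq : G.dist u b ≤ q.length := SimpleGraph.dist_le q
    rw [SimpleGraph.Walk.length_cons, SimpleGraph.dist_comm] at hp
    rw [SimpleGraph.dist_comm] at hq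
    have := hvu.diff_dist_adj (u := b)
    omega

theorem dist_induction {P : V → Prop} (base : P b)
    (step : ∀ u v, G.Adj u v → G.dist b v = G.dist b u + 1 → P u → P v)
    {v : V} (hv : G.Reachable b v) : P v := by
  induction hn : G.dist b v generalizing v with
  | zero => exact hv.dist_eq_zero_iff.mp hn ▸ base
  | succ n ih =>
    obtain ⟨u, huv, hdist⟩ := exists_adj_dist_eq_add_one (hn.trans_ne n.succ_ne_zero)
    exact step u v huv hdist (ih (hv.trans huv.symm.reachable) (by omega))

theorem abs_sub_le_length_of_abs_sub_le_one {l : V → ℤ}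
    (hl : ∀ ⦃u v⦄, G.Adj u v → |l u - l v| ≤ 1) {u v : V} (p : G.Walk u v) :
    |l u - l v| ≤ p.length := by
  induction p with
  | nil => simp
  | @cons u w v huw q ih =>
    calc |l u - l v| ≤ |l u - l w| + |l w - l v| := abs_sub_le _ _ _
      _ ≤ 1 + q.length := add_le_add (hl huw) ih
      _ = (SimpleGraph.Walk.cons huw q).length := by
        rw [SimpleGraph.Walk.length_cons]; push_cast; ring

theorem abs_sub_le_dist_of_abs_sub_le_one {l : V → ℤ}
    (hl : ∀ ⦃u v⦄, G.Adj u v → |l u - l v| ≤ 1) {u v : V} (huv : G.Reachable u v) :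
    |l u - l v| ≤ G.dist u v := by
  obtain ⟨p, hp⟩ := huv.exists_walk_length_eq_dist
  exact hp ▸ abs_sub_le_length_of_abs_sub_le_one hl p

end Distance

section DistLayering

variable {V : Type*} {G : SimpleGraph V} {b : V}

/-- The layering `v ↦ -dist b v`, whose facet graph `G₁` has every edge directed towards `b`. -/
noncomputable abbrev distLayering (G : SimpleGraph V) (b : V) : V → ℤ :=
  fun v => -(G.dist b v : ℤ)

theorem mk_mem_facetDigraph_distLayering {u v : V} :
    (u, v) ∈ facetDigraph G (distLayering G b) ↔ G.Adj u v ∧ G.dist b u = G.dist b v + 1 := by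
  refine and_congr_right fun _ => ?_
  dsimp only [distLayering]
  omega

theorem isLayering_distLayering (hG : G.Connected) (b : V) :
    IsLayering G (distLayering G b) where
  step u v huv := by
    have := huv.diff_dist_adj (u := b)
    rw [abs_le]
    dsimp only [distLayering]
    omega
  conn := by
    refine (SimpleGraph.connected_iff_exists_forall_reachable _).mpr
      ⟨b, fun v => dist_induction .rfl (fun u v huv hdist hu => ?_) (hG.preconnected b v)⟩
    refine hu.trans (SimpleGraph.Adj.reachable ⟨huv.ne, Or.inl ⟨huv, ?_⟩⟩)
    simp [distLayering, hdist]

theorem mem_of_reachable_of_facetDigraph_distLayering {S : Set V} (hb : b ∈ S)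
    (hS : ∀ p ∈ facetDigraph G (distLayering G b), p.2 ∈ S → p.1 ∈ S)
    {v : V} (hv : G.Reachable b v) : v ∈ S :=
  dist_induction hb
    (fun u v huv hdist => hS (v, u) (mk_mem_facetDigraph_distLayering.mpr ⟨huv.symm, hdist⟩)) hv

theorem facetDigraph_eq_of_forall_sub_eq {l m : V → ℤ} {c : ℤ} (h : ∀ v, m v - l v = c) :
    facetDigraph G l = facetDigraph G m := by
  ext ⟨u, v⟩
  refine and_congr_right fun _ => ?_
  have hu := h u
  have hv := h v
  dsimp only
  omega

end DistLayering

section Weight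

variable {V : Type*} [Fintype V] {b : V}
  {R : Type*} [Ring R] [LinearOrder R] [IsStrictOrderedRing R]

theorem sum_mul_pos_of_forall_le {f g : V → R} (hsum : ∑ v, f v = 0) (hneg : ∀ v, v ≠ b → f v < 0)
    (hle : ∀ v, g v ≤ g b) (hne : ∃ v, g v ≠ g b) : 0 < ∑ v, g v * f v := by
  have hshift : ∑ v, g v * f v = ∑ v, (g v - g b) * f v := by
    simp only [sub_mul, Finset.sum_sub_distrib, ← Finset.mul_sum, hsum, mul_zero, sub_zero]
  rw [hshift]
  refine Finset.sum_pos' (fun v _ => ?_) ?_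
  · rcases eq_or_ne v b with rfl | hv
    · simp
    · exact mul_nonneg_of_nonpos_of_nonpos (sub_nonpos.mpr (hle v)) (hneg v hv).le
  · obtain ⟨v, hv⟩ := hne
    exact ⟨v, Finset.mem_univ v, mul_pos_of_neg_of_neg
      (sub_neg.mpr ((hle v).lt_of_ne hv)) (hneg v (ne_of_apply_ne g hv))⟩

theorem sum_mul_lt_sum_distLayering_mul {G : SimpleGraph V} (hG : G.Connected) {f : V → R}
    (hsum : ∑ v, f v = 0) (hneg : ∀ v, v ≠ b → f v < 0) {l : V → ℤ}
    (hl : ∀ ⦃u v⦄, G.Adj u v → |l u - l v| ≤ 1)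
    (hne : facetDigraph G l ≠ facetDigraph G (distLayering G b)) :
    ∑ v, (l v : R) * f v < ∑ v, (distLayering G b v : R) * f v := by
  let g : V → ℤ := fun v => distLayering G b v - l v
  have hle (v : V) : g v ≤ g b := by
    have hdist := abs_le.mp (abs_sub_le_dist_of_abs_sub_le_one hl (hG.preconnected b v))
    simp only [g, distLayering, SimpleGraph.dist_self]
    omega
  have hnonconst : ∃ v, g v ≠ g b := by
    by_contra! hconst
    exact hne (facetDigraph_eq_of_forall_sub_eq hconst)
  have hpos : 0 < ∑ v, (g v : R) * f v :=
    sum_mul_pos_of_forall_le hsum hneg (fun v => Int.cast_le.mpr (hle v))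
      (hnonconst.imp fun _ => Int.cast_injective.ne)
  simpa only [g, Int.cast_sub, sub_mul, Finset.sum_sub_distrib, sub_pos] using hpos

variable [DecidableEq V] {f : V → ℝ}

theorem IsWeight.sum_eq_zero (hf : IsWeight b f) : ∑ v, f v = 0 := by
  rw [← Finset.add_sum_erase _ _ (Finset.mem_univ b), hf.total, hf.base, add_neg_cancel]

theorem IsWeight.neg (hf : IsWeight b f) (v : V) (hv : v ≠ b) : f v < 0 :=
  (hf.ub v hv).lt_of_ne (hf.indep.ne_zero ⟨v, hv⟩)

end Weight

theorem first_facet_graph_general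
    {V : Type*} [Fintype V] {R : Type*} [Ring R] [LinearOrder R] [IsStrictOrderedRing R]
    (G : SimpleGraph V) (hG : G.Connected)
    (b0 : V) (f : V → R) (hsum : ∑ v, f v = 0) (hneg : ∀ v, v ≠ b0 → f v < 0) :
    IsLayering G (distLayering G b0) ∧
    (¬ ∃ V0 : Set V, V0.Nonempty ∧ V0ᶜ.Nonempty ∧ b0 ∈ V0 ∧
        ∀ p ∈ facetDigraph G (distLayering G b0), p.2 ∈ V0 → p.1 ∈ V0) ∧
    (∀ l : V → ℤ, (∀ ⦃u v⦄, G.Adj u v → |l u - l v| ≤ 1) →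
      facetDigraph G l ≠ facetDigraph G (distLayering G b0) →
      ∑ v, (l v : R) * f v < ∑ v, (distLayering G b0 v : R) * f v) := by
  refine ⟨isLayering_distLayering hG b0, ?_,
    fun l hl hne => sum_mul_lt_sum_distLayering_mul hG hsum hneg hl hne⟩
  rintro ⟨V0, -, ⟨v, hv⟩, hb0, hclosed⟩
  exact hv (mem_of_reachable_of_facetDigraph_distLayering hb0 hclosed (hG.preconnected b0 v))

/-- The function `l(v) = −dist(b₀, v)` is a layering; its facet graph admits no directed cut
pointing away from the side of `b₀`; and its `f`-value is strictly larger than that of every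
other facet graph. -/
theorem first_facet_graph
    {V : Type*} [Fintype V] [DecidableEq V]
    (G : SimpleGraph V) (hG : G.Connected)
    (b0 : V) (f : V → ℝ) (hf : IsWeight b0 f) :
    IsLayering G (fun v => -(G.dist b0 v : ℤ)) ∧
    (¬ ∃ V0 : Set V, V0.Nonempty ∧ V0ᶜ.Nonempty ∧ b0 ∈ V0 ∧
        ∀ p ∈ facetDigraph G (fun v => -(G.dist b0 v : ℤ)), p.2 ∈ V0 → p.1 ∈ V0) ∧
    (∀ l : V → ℤ, IsLayering G l →
      facetDigraph G l ≠ facetDigraph G (fun v => -(G.dist b0 v : ℤ)) →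
      ∑ v, (l v : ℝ) * f v < ∑ v, ((-(G.dist b0 v : ℤ) : ℤ) : ℝ) * f v) := by
  obtain ⟨hlayering, hcut, hmax⟩ := first_facet_graph_general G hG b0 f hf.sum_eq_zero hf.neg
  exact ⟨hlayering, hcut, fun l hl => hmax l hl.step⟩

end SEP
end

section
/- Let 𝒢 be a finite connected simple graph and let G and G′ be facet graphs of 𝒢. Suppose an edge xy of 𝒢 is present in G directed from x to y, and is not present in G′. Then there exists a partition (V_0, V_1) of V with x ∈ V_0 and y ∈ V_1 such that every edge of 𝒢 between V_0 and V_1 is either not present in G or directed from V_0 to V_1 in G, and is either not present in G′ or directed from V_1 to V_0 in G′. -/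
open scoped Classical Pointwise

namespace SEP

/-! The difference `l - l'` weakly increases along every edge of the facet graph of `l`, because
there `l` grows by exactly `1` and `l'` by at most `1`; by symmetry it weakly decreases along the
edges of the facet graph of `l'`. It strictly increases from `x` to `y`, so its sublevel set at the
height of `x` is the required side `V₀` of the cut. -/

section Cut

variable {V : Type*} {G : SimpleGraph V} {l l' : V → ℤ} {p : V × V}

lemma sub_le_sub_of_mem_facetDigraph (hl' : ∀ ⦃u v⦄, G.Adj u v → |l' u - l' v| ≤ 1)
    (hp : p ∈ facetDigraph G l) : l p.1 - l' p.1 ≤ l p.2 - l' p.2 := by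
  obtain ⟨hadj, hl_grow⟩ := hp
  have hl'_grow : l' p.2 - l' p.1 ≤ 1 := (abs_le.mp (hl' hadj.symm)).2
  linarith

lemma sub_lt_sub_of_mem_of_notMem_facetDigraph (hl' : ∀ ⦃u v⦄, G.Adj u v → |l' u - l' v| ≤ 1)
    (hp : p ∈ facetDigraph G l) (hp' : p ∉ facetDigraph G l') :
    l p.1 - l' p.1 < l p.2 - l' p.2 := by
  refine (sub_le_sub_of_mem_facetDigraph hl' hp).lt_of_ne fun heq ↦ hp' ⟨hp.1, ?_⟩
  linarith [hp.2]

theorem cut_from_present_and_hidden_edge_general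
    (hl : ∀ ⦃u v⦄, G.Adj u v → |l u - l v| ≤ 1) (hl' : ∀ ⦃u v⦄, G.Adj u v → |l' u - l' v| ≤ 1)
    {x y : V} (hxy : (x, y) ∈ facetDigraph G l) (hxy' : (x, y) ∉ facetDigraph G l') :
    ∃ V0 : Set V, x ∈ V0 ∧ y ∉ V0 ∧
      (∀ p ∈ facetDigraph G l, p.2 ∈ V0 → p.1 ∈ V0) ∧
      (∀ p ∈ facetDigraph G l', p.1 ∈ V0 → p.2 ∈ V0) := by
  refine ⟨{v | l v - l' v ≤ l x - l' x}, ?_⟩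
  simp only [Set.mem_ofPred_eq]
  refine ⟨le_rfl, ?_, fun p hp hp₂ ↦ ?_, fun p hp hp₁ ↦ ?_⟩
  · exact (sub_lt_sub_of_mem_of_notMem_facetDigraph hl' hxy hxy').not_ge
  · exact (sub_le_sub_of_mem_facetDigraph hl' hp).trans hp₂
  · have hdecr : l p.2 - l' p.2 ≤ l p.1 - l' p.1 := by
      linarith [sub_le_sub_of_mem_facetDigraph hl hp]
    exact hdecr.trans hp₁

end Cut

/-- If an edge `xy` of `G` is present in a facet graph directed x→y and hidden in another
facet graph, then there is a partition `(V₀, V₁)` with `x ∈ V₀`, `y ∈ V₁` such that every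
edge of `G` between the parts is, in the first facet graph, hidden or directed from `V₀` to
`V₁`, and, in the second one, hidden or directed from `V₁` to `V₀`. -/
theorem cut_from_present_and_hidden_edge
    {V : Type*} [Fintype V] [DecidableEq V]
    (G : SimpleGraph V) (hG : G.Connected)
    (l l' : V → ℤ) (hl : IsLayering G l) (hl' : IsLayering G l')
    (x y : V) (hxy : (x, y) ∈ facetDigraph G l)
    (h1 : (x, y) ∉ facetDigraph G l') (h2 : (y, x) ∉ facetDigraph G l') :
    ∃ V0 : Set V, x ∈ V0 ∧ y ∉ V0 ∧
      (∀ p ∈ facetDigraph G l, p.2 ∈ V0 → p.1 ∈ V0) ∧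
      (∀ p ∈ facetDigraph G l', p.1 ∈ V0 → p.2 ∈ V0) :=
  cut_from_present_and_hidden_edge_general hl.step hl'.step hxy h1

end SEP
end
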